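/- arXiv:2108.12312 — 2 statements merged into one kernel-verified Lean document; each statement's English description precedes it below -/
import Mathlib

section
/- Let p, q ∈ R be idempotents such that p - q and (1-p) - q are both group invertible. Then p*q - q*p, q1 - q1^2 and q4 - q4^2 are group invertible and (p*q - q*p)*(p*q - q*p)^# = (q1 - q1^2)*(q1 - q1^2)^# + (q4 - q4^2)*(q4 - q4^2)^#. -/
/-!
Put `a = p - q` and `b = 1 - p - q`. Then `a² + b² = 1`, `b * a = p * q - q * p = -(a * b)`, and
`a²`, `b²` commute with `p` and `q`. Since `a` and `b` anticommute, the idempotent `a * a^#` commutes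
with `b` and `b * b^#` commutes with `a`, which makes `a^# * b^#` a group inverse of `b * a` with
`(b * a) * (b * a)^# = e`, where `e = a * a^# * (b * b^#)`. The same holds for `m = b² * a²`, and
`m * m^# = e` again. Finally `q1 - q1² = p * m` and `q4 - q4² = (1 - p) * m`; as `p` commutes with `m`,
the products of these two elements with their group inverses are `p * e` and `(1 - p) * e`, which add up to `e`.
-/

variable {R : Type*} [Ring R]

/-- `c` is a group inverse of `a`. -/
def IsGroupInvOf (a c : R) : Prop := a * c * a = a ∧ c * a * c = c ∧ a * c = c * a

/-- `a` is group invertible. -/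
def GroupInvertible (a : R) : Prop := ∃ c, IsGroupInvOf a c

/-- The group inverse `a^#` (junk value `0` if it does not exist). -/
noncomputable def gi (a : R) : R :=
  haveI := Classical.dec (GroupInvertible a)
  if h : GroupInvertible a then h.choose else 0

/-- The spectral idempotent `a^π = 1 - a * a^#`. -/
noncomputable def sp (a : R) : R := 1 - a * gi a

theorem IsGroupInvOf.gi_eq {a c : R} (h : IsGroupInvOf a c) : gi a = c := by
  have hex : GroupInvertible a := ⟨c, h⟩
  have hg : IsGroupInvOf a (gi a) := by
    unfold gi
    rw [dif_pos hex]
    exact hex.choose_spec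
  generalize gi a = d at hg
  obtain ⟨h1, h2, h3⟩ := h
  obtain ⟨g1, g2, g3⟩ := hg
  have e : a * d = a * c := by
    calc a * d = a * c * a * d := by rw [h1]
      _ = c * (a * d * a) := by rw [h3, mul_assoc, mul_assoc, mul_assoc a d a, ← g3]
      _ = a * c := by rw [g1, h3]
  calc d = d * (a * d) := by rw [← mul_assoc, g2]
    _ = (d * a) * c := by rw [e, mul_assoc]
    _ = c := by rw [← g3, e, h3, h2]

/-- The idempotent `a * a^#` lies in the double commutant of `a`. -/
theorem IsGroupInvOf.commute_mul {a c x : R} (h : IsGroupInvOf a c) (hx : Commute a x) :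
    Commute (a * c) x := by
  obtain ⟨h1, h2, h3⟩ := h
  have l : a * c * x * (a * c) = x * (a * c) := by
    calc a * c * x * (a * c) = a * c * (x * a) * c := by simp only [mul_assoc]
      _ = (a * c * a) * x * c := by rw [← hx.eq]; simp only [mul_assoc]
      _ = x * (a * c) := by rw [h1, hx.eq, mul_assoc]
  have r : a * c * x * (a * c) = a * c * x := by
    calc a * c * x * (a * c) = c * (a * x) * (a * c) := by rw [h3]; simp only [mul_assoc]
      _ = c * x * (a * c * a) := by rw [hx.eq, mul_assoc (a := a), ← h3]; simp only [mul_assoc]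
      _ = a * c * x := by rw [h1, mul_assoc, ← hx.eq, h3, mul_assoc]
  exact r.symm.trans l

theorem IsGroupInvOf.commute_inv {a c x : R} (h : IsGroupInvOf a c) (hx : Commute a x) :
    Commute c x := by
  have hc := (h.commute_mul hx).eq
  obtain ⟨h1, h2, h3⟩ := h
  calc c * x = c * (a * c * x) := by rw [← mul_assoc, ← mul_assoc, h2]
    _ = c * (x * a) * c := by rw [hc]; simp only [mul_assoc]
    _ = (a * c * x) * c := by rw [← hx.eq, h3]; simp only [mul_assoc]
    _ = x * c := by rw [hc, h3, mul_assoc, h2]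

/-- A reverse order law: it only needs the idempotents `a * c`, `b * d` to commute with the opposite
factors, so it covers both commuting and anticommuting `a`, `b`. -/
theorem IsGroupInvOf.mul {a c b d : R} (ha : IsGroupInvOf a c) (hb : IsGroupInvOf b d)
    (hab : Commute (a * c) b) (hba : Commute (b * d) a) :
    IsGroupInvOf (b * a) (c * d) ∧ b * a * (c * d) = a * c * (b * d) := by
  -- `d` is recovered from `b` as its group inverse, so whatever commutes with `b` commutes with it.
  have had : Commute (a * c) d := (hb.commute_inv hab.symm).symm
  have e1 : b * a * (c * d) = a * c * (b * d) := by
    calc b * a * (c * d) = b * (a * c) * d := by simp only [mul_assoc]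
      _ = a * c * (b * d) := by rw [← hab.eq, mul_assoc]
  have e2 : c * d * (b * a) = a * c * (b * d) := by
    calc c * d * (b * a) = c * (d * b * a) := by simp only [mul_assoc]
      _ = c * a * (b * d) := by rw [← hb.2.2, hba.eq, mul_assoc]
      _ = a * c * (b * d) := by rw [ha.2.2]
  refine ⟨⟨?_, ?_, e1.trans e2.symm⟩, e1⟩
  · calc b * a * (c * d) * (b * a) = a * c * (b * d * b) * a := by
          rw [e1]; simp only [mul_assoc]
      _ = b * (a * c * a) := by rw [hb.1, hab.eq, mul_assoc]
      _ = b * a := by rw [ha.1]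
  · calc c * d * (b * a) * (c * d) = c * ((d * b * a) * c) * d := by simp only [mul_assoc]
      _ = c * (a * (d * b) * c) * d := by rw [← hb.2.2, hba.eq]
      _ = c * a * (b * d) * (c * d) := by rw [hb.2.2]; simp only [mul_assoc]
      _ = c * d := by
        have hcd : Commute (b * d) c := (ha.commute_inv hba.symm).symm
        calc c * a * (b * d) * (c * d) = c * a * ((b * d) * c) * d := by simp only [mul_assoc]
          _ = (c * a * c) * (b * d * d) := by rw [hcd.eq]; simp only [mul_assoc]
          _ = c * d := by rw [ha.2.1, hb.2.2, hb.2.1]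

theorem IsGroupInvOf.sq {a c : R} (h : IsGroupInvOf a c) :
    IsGroupInvOf (a * a) (c * c) ∧ a * a * (c * c) = a * c := by
  have hc := h.commute_mul (Commute.refl a)
  obtain ⟨h1, h2⟩ := h.mul h hc hc
  exact ⟨h1, by rw [h2, ← mul_assoc, h.1]⟩

/-- If `x` is idempotent and commutes with `m`, then `x * m` is group invertible, with
`(x * m) * (x * m)^# = x * (m * m^#)`. -/
theorem IsGroupInvOf.idem_mul {x m n : R} (h : IsGroupInvOf m n) (hx : x * x = x)
    (hm : Commute m x) :
    GroupInvertible (x * m) ∧ x * m * gi (x * m) = x * (m * n) := by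
  have hxi : IsGroupInvOf x x := ⟨by rw [hx, hx], by rw [hx, hx], rfl⟩
  have hmn := h.commute_mul hm
  obtain ⟨h1, h2⟩ := h.mul hxi hmn (by rw [hx]; exact hm.symm)
  exact ⟨⟨_, h1⟩, by rw [h1.gi_eq, h2, hx, hmn.eq]⟩

theorem spectral_idem_commutator (p q q1 q2 q3 q4 : R) (hp : p * p = p) (hq : q * q = q)
    (h1 : q1 = p * q * p) (h2 : q2 = p * q * (1 - p))
    (h3 : q3 = (1 - p) * q * p) (h4 : q4 = (1 - p) * q * (1 - p))
    (hpq : GroupInvertible (p - q)) (hpbq : GroupInvertible ((1 - p) - q)) :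
    GroupInvertible (p * q - q * p) ∧ GroupInvertible (q1 - q1 ^ 2) ∧
      GroupInvertible (q4 - q4 ^ 2) ∧
      (p * q - q * p) * gi (p * q - q * p) =
        (q1 - q1 ^ 2) * gi (q1 - q1 ^ 2) + (q4 - q4 ^ 2) * gi (q4 - q4 ^ 2) := by
  obtain ⟨c, hc⟩ := hpq
  obtain ⟨d, hd⟩ := hpbq
  have hk : p * q - q * p = (1 - p - q) * (p - q) := by
    simp only [mul_sub, sub_mul, one_mul, hp, hq]; abel
  have hk' : (p - q) * (1 - p - q) = -((1 - p - q) * (p - q)) := by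
    simp only [mul_sub, sub_mul, mul_one, one_mul, hp, hq]; abel
  have hap : Commute ((p - q) * (p - q)) p := by
    simp only [Commute, SemiconjBy, mul_sub, sub_mul, hp, hq, mul_assoc]
    simp only [← mul_assoc, hp]; abel
  have hbp : Commute ((1 - p - q) * (1 - p - q)) p := by
    have : (1 - p - q) * (1 - p - q) = 1 - (p - q) * (p - q) := by
      simp only [mul_sub, sub_mul, mul_one, one_mul, hp, hq]; abel
    rw [this]
    exact (Commute.one_left p).sub_left hap
  -- `q1 - q1²` and `q4 - q4²` are the two corners of `m = b² * a²`.
  have hq1 : q1 - q1 ^ 2 =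
      p * ((1 - p - q) * (1 - p - q) * ((p - q) * (p - q))) := by
    have e1 : p * ((1 - p - q) * (1 - p - q)) = p * q * p := by
      simp only [mul_sub, sub_mul, mul_one, one_mul, hp, hq, ← mul_assoc]; abel
    have e2 : p * ((p - q) * (p - q)) = p - p * q * p := by
      simp only [mul_sub, sub_mul, hp, hq, ← mul_assoc]
      simp only [mul_assoc]; abel
    rw [← mul_assoc, e1, mul_assoc (p * q), e2, h1]
    simp only [mul_sub, sq, ← mul_assoc, mul_assoc _ p p, hp]
  have hq4 : q4 - q4 ^ 2 =
      (1 - p) * ((1 - p - q) * (1 - p - q) * ((p - q) * (p - q))) := by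
    have hr : (1 - p) * (1 - p) = 1 - p := by
      simp only [mul_sub, sub_mul, mul_one, one_mul, hp]; abel
    have hpr : p = 1 - (1 - p) := by abel
    generalize 1 - p = r at *
    subst hpr
    have e1 : r * ((r - q) * (r - q)) = r - r * q * r := by
      simp only [mul_sub, sub_mul, hr, hq, ← mul_assoc]
      simp only [mul_assoc]; abel
    have e2 : r * ((1 - r - q) * (1 - r - q)) = r * q * r := by
      simp only [mul_sub, sub_mul, mul_one, one_mul, hr, hq, ← mul_assoc]; abel
    have e3 : (r - r * q * r) = (r - r * q * r) * r := by
      simp only [sub_mul, mul_assoc, hr]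
    rw [← mul_assoc, e1, e3, mul_assoc, e2, h4]
    simp only [sub_mul, sq, ← mul_assoc, hr]
  rw [hk, hq1, hq4]
  generalize p - q = a at *
  generalize 1 - p - q = b at *
  have haab : Commute (a * a) b := by
    change a * a * b = b * (a * a)
    rw [mul_assoc, hk', mul_neg, ← mul_assoc, hk', neg_mul, neg_neg, mul_assoc]
  have hbba : Commute (b * b) a := by
    change b * b * a = a * (b * b)
    rw [← mul_assoc, hk', neg_mul, mul_assoc b a b, hk', mul_neg, neg_neg, mul_assoc]
  obtain ⟨hc2, hc2e⟩ := hc.sq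
  obtain ⟨hd2, hd2e⟩ := hd.sq
  -- The spectral idempotents of `a` and `a²` agree, so `a * c` commutes with `b`.
  have hacb : Commute (a * c) b := hc2e ▸ hc2.commute_mul haab
  have hbda : Commute (b * d) a := hd2e ▸ hd2.commute_mul hbba
  obtain ⟨hK, hKe⟩ := hc.mul hd hacb hbda
  obtain ⟨hM, hMe⟩ := hc2.mul hd2 (hc2e.symm ▸ hacb.mul_right hacb)
    (hd2e.symm ▸ hbda.mul_right hbda)
  obtain ⟨g1, f1⟩ := hM.idem_mul hp (hbp.mul_left hap)
  obtain ⟨g4, f4⟩ := hM.idem_mul (x := 1 - p)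
    (by simp only [mul_sub, sub_mul, mul_one, one_mul, hp]; abel)
    ((Commute.one_right _).sub_right (hbp.mul_left hap))
  refine ⟨⟨_, hK⟩, g1, g4, ?_⟩
  rw [f1, f4, hK.gi_eq, hKe, hMe, hc2e, hd2e, ← add_mul, add_sub_cancel, one_mul]
end

section
/- Let p, q ∈ R be idempotents such that p - q is group invertible. Then (p - q)^# = f + g - h. -/
/-!
Write `a = p - q`, `c = a^#` and `e = a * c`. Idempotency of `p` and `q` gives the identity
`p * a + a * p = a * a + a`. Multiplying it by `1 - e` on the right (left) and cancelling `a`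
shows `c * p * e = c * p` and `e * p * c = p * c`; multiplying it by `c` on both sides then
turns it into `c * p + p * c = e + c`, which is the claim.
-/

variable {R : Type*} [Ring R]

/-- The value chosen by `gi` is a group inverse as soon as one exists. -/
lemma isGroupInvOf_gi {a : R} (ha : GroupInvertible a) : IsGroupInvOf a (gi a) := by
  unfold gi
  rw [dif_pos ha]
  exact ha.choose_spec

/-- The identity `p * a + a * p = a * a + a` passes to a group inverse `c` of `a`: it is
sandwiched between two factors `c`, once `a * c` is known to absorb into `c * p` and `p * c`. -/
lemma IsGroupInvOf.mul_add_mul_eq {a c p : R} (hc : IsGroupInvOf a c)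
    (hpa : p * a + a * p = a * a + a) : p * c + c * p = c * a + c := by
  obtain ⟨h1, h2, h3⟩ := hc
  have hcca : c * c * a = c := by rw [mul_assoc, ← h3, ← mul_assoc, h2]
  have hacc : a * c * c = c := by rw [h3, h2]
  have haac : a * a * c = a := by rw [mul_assoc, h3, ← mul_assoc, h1]
  have hcaa : c * a * a = a := by rw [← h3, h1]
  have right : c * p * (a * c) = c * p := by
    have key : a * p * (a * c) = a * p := by
      have h := congrArg (fun x => x * (a * c) - x) hpa
      have e1 : p * a * (a * c) = p * a := by
        rw [mul_assoc, ← mul_assoc a a c, haac]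
      have e2 : a * a * (a * c) = a * a := by
        rw [mul_assoc, ← mul_assoc a a c, haac]
      have e3 : a * (a * c) = a := by rw [← mul_assoc, haac]
      simp only [add_mul, e1, e2, e3, sub_self] at h
      rwa [add_sub_add_left_eq_sub, sub_eq_zero] at h
    calc c * p * (a * c) = c * c * a * p * (a * c) := by rw [hcca]
      _ = c * c * (a * p * (a * c)) := by simp only [mul_assoc]
      _ = c * c * a * p := by rw [key]; simp only [mul_assoc]
      _ = c * p := by rw [hcca]
  have left : c * a * (p * c) = p * c := by
    have key : c * a * (p * a) = p * a := by
      have h := congrArg (fun x => c * a * x - x) hpa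
      have e1 : c * a * (a * p) = a * p := by rw [← mul_assoc, hcaa]
      have e2 : c * a * (a * a) = a * a := by rw [← mul_assoc, hcaa]
      simp only [mul_add, e1, e2, hcaa, sub_self] at h
      rwa [add_sub_add_right_eq_sub, sub_eq_zero] at h
    calc c * a * (p * c) = c * a * (p * (a * c * c)) := by rw [hacc]
      _ = c * a * (p * a) * (c * c) := by simp only [mul_assoc]
      _ = p * (a * c * c) := by rw [key]; simp only [mul_assoc]
      _ = p * c := by rw [hacc]
  calc p * c + c * p = c * a * (p * c) + c * p * (a * c) := by rw [left, right]
    _ = c * (p * a + a * p) * c := by simp only [mul_add, add_mul, mul_assoc]; abel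
    _ = c * a * a * c + c * a * c := by rw [hpa]; simp only [mul_add, add_mul, mul_assoc]
    _ = c * a + c := by rw [hcaa, h2, h3]

theorem group_inv_eq_f_add_g_sub_h (p q f g h : R) (hp : p * p = p) (hq : q * q = q)
    (hpq : GroupInvertible (p - q))
    (hf : f = p * gi (p - q)) (hg : g = gi (p - q) * p)
    (hh : h = gi (p - q) * (p - q)) :
    gi (p - q) = f + g - h := by
  have hpa : p * (p - q) + (p - q) * p = (p - q) * (p - q) + (p - q) := by
    simp only [mul_sub, sub_mul, hp, hq]
    abel
  rw [hf, hg, hh, (isGroupInvOf_gi hpq).mul_add_mul_eq hpa, add_sub_cancel_left]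
end
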